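/- For each integer d ≥ 2, the critical point p_h(S^d) of the d-ray star graph S^d equals the unique solution p ∈ (0, 1/4] of the equation ((1 + √(1 − 4p))/2)^d = p. -/

import Mathlib

open MeasureTheory ProbabilityTheory

/-- A process `X` indexed by the vertices of a graph `G` is *1-dependent* if its
restrictions to any two vertex sets at graph distance greater than 1 (i.e. containing
no common and no adjacent vertices) are independent. -/
def OneDependent {V E Ω : Type*} [MeasurableSpace E] (G : SimpleGraph V)
    [MeasurableSpace Ω] (μ : Measure Ω) (X : V → Ω → E) : Prop :=
  ∀ A B : Set V, (∀ a ∈ A, ∀ b ∈ B, a ≠ b ∧ ¬G.Adj a b) →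
    IndepFun (fun ω (a : A) => X a.1 ω) (fun ω (b : B) => X b.1 ω) μ

/-- A `{0,1}`-valued process is a *hard-core process* on `G` if almost surely no two
adjacent vertices both take the value `1` (`true`). -/
def HardCore {V Ω : Type*} (G : SimpleGraph V) [MeasurableSpace Ω]
    (μ : Measure Ω) (J : V → Ω → Bool) : Prop :=
  ∀ u v, G.Adj u v → μ {ω | J u ω = true ∧ J v ω = true} = 0

/-- The critical point `p_h(G)`: the supremum of all `p` for which a 1-dependent
hard-core process on `G` with marginals `P(J_v = 1) = p` exists. -/
noncomputable def pCrit {V : Type*} (G : SimpleGraph V) : ℝ :=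
  sSup {p : ℝ | ∃ (Ω : Type) (_ : MeasurableSpace Ω) (μ : Measure Ω),
    IsProbabilityMeasure μ ∧ ∃ J : V → Ω → Bool,
      (∀ v, Measurable (J v)) ∧ HardCore G μ J ∧ OneDependent G μ J ∧
      ∀ v, (μ {ω | J v ω = true}).toReal = p}

/-- The `d`-ray star graph: a distinguished vertex `none`, and `d` infinite rays;
`some (i, k)` is the `(k+1)`-st vertex of ray `i`. -/
def starGraph (d : ℕ) : SimpleGraph (Option (Fin d × ℕ)) :=
  SimpleGraph.fromRel (fun u v =>
    (∃ i, u = none ∧ v = some (i, 0)) ∨ (∃ i k, u = some (i, k) ∧ v = some (i, k + 1)))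

theorem starGraph_adj_none (d : ℕ) (v : Option (Fin d × ℕ)) :
    (starGraph d).Adj none v ↔ ∃ i, v = some (i, 0) := by
  simp only [starGraph, SimpleGraph.fromRel_adj]
  constructor
  · rintro ⟨h, (⟨i, -, hi⟩ | ⟨i, k, h1, -⟩) | ⟨i, h1, h2⟩ | ⟨i, k, h1, h2⟩⟩
    · exact ⟨i, hi⟩
    · cases h1
    · cases h2
    · cases h2
  · rintro ⟨i, rfl⟩
    exact ⟨by simp, Or.inl (Or.inl ⟨i, by simp⟩)⟩

theorem starGraph_adj_some (d : ℕ) (i j : Fin d) (k l : ℕ) :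
    (starGraph d).Adj (some (i, k)) (some (j, l)) ↔ i = j ∧ (l = k + 1 ∨ k = l + 1) := by
  simp only [starGraph, SimpleGraph.fromRel_adj]
  constructor
  · rintro ⟨h, (⟨i, h1, hi⟩ | ⟨i', k', h1, h2⟩) | ⟨i, h1, h2⟩ | ⟨i', k', h1, h2⟩⟩
    · cases h1
    · simp only [Option.some.injEq, Prod.mk.injEq] at h1 h2
      exact ⟨h1.1.trans h2.1.symm, by omega⟩
    · cases h1
    · simp only [Option.some.injEq, Prod.mk.injEq] at h1 h2
      exact ⟨h2.1.trans h1.1.symm, by omega⟩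
  · rintro ⟨rfl, rfl | rfl⟩
    · exact ⟨by simp, Or.inl (Or.inr ⟨i, k, rfl, rfl⟩)⟩
    · exact ⟨by simp, Or.inr (Or.inr ⟨i, l, rfl, rfl⟩)⟩

/-! ### Construction -/

/-- The edges at a vertex. -/
def starEdges (d : ℕ) : Option (Fin d × ℕ) → Set (Fin d × ℕ)
  | none => {e | e.2 = 0}
  | some (i, k) => {e | e = (i, k) ∨ e = (i, k + 1)}

/-- The block factor. -/
def starJ (d : ℕ) : Option (Fin d × ℕ) → (Fin d × ℕ → Bool) → Bool
  | none => fun ω => decide (∀ i, ω (i, 0) = true)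
  | some (i, k) => fun ω => !(ω (i, k)) && ω (i, k + 1)

theorem starEdges_far (d : ℕ) (u v : Option (Fin d × ℕ)) (e : Fin d × ℕ)
    (hu : e ∈ starEdges d u) (hv : e ∈ starEdges d v) : u = v ∨ (starGraph d).Adj u v := by
  obtain ⟨x, y⟩ := e
  rcases u with _ | ⟨i, k⟩ <;> rcases v with _ | ⟨j, l⟩
  · exact Or.inl rfl
  · right
    rw [starGraph_adj_none]
    simp only [starEdges, Set.mem_ofPred_eq, Prod.mk.injEq] at hu hv
    exact ⟨j, by simp; omega⟩
  · right
    rw [SimpleGraph.adj_comm, starGraph_adj_none]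
    simp only [starEdges, Set.mem_ofPred_eq, Prod.mk.injEq] at hu hv
    exact ⟨i, by simp; omega⟩
  · rw [starGraph_adj_some]
    simp only [starEdges, Set.mem_ofPred_eq, Prod.mk.injEq, Option.some.injEq] at hu hv ⊢
    have : i = j := by rcases hu with h | h <;> rcases hv with h' | h' <;> rw [← h.1, ← h'.1]
    simp only [this, true_and]
    omega

/-- Measurability with respect to a restricted sigma algebra. -/
theorem starJ_meas (d : ℕ) (v : Option (Fin d × ℕ)) (m : MeasurableSpace (Fin d × ℕ → Bool))
    (h : ∀ e ∈ starEdges d v, Measurable[m] (fun ω : Fin d × ℕ → Bool => ω e)) :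
    Measurable[m] (starJ d v) := by
  rcases v with _ | ⟨i, k⟩
  · have : ∀ i : Fin d, MeasurableSet[m] {ω : Fin d × ℕ → Bool | ω (i, 0) = true} := fun i =>
      h (i, 0) (by simp [starEdges]) (measurableSet_singleton true)
    refine measurable_to_bool ?_
    have h2 : starJ d none ⁻¹' {true} = ⋂ i : Fin d, {ω | ω (i, 0) = true} := by
      ext ω; simp [starJ]
    rw [h2]
    exact MeasurableSet.iInter this
  · have h0 := h (i, k) (by simp [starEdges])
    have h1 := h (i, k + 1) (by simp [starEdges])
    refine measurable_to_bool ?_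
    have h2 : starJ d (some (i, k)) ⁻¹' {true} =
        {ω | ω (i, k) = false} ∩ {ω | ω (i, k + 1) = true} := by
      ext ω; simp [starJ]
    rw [h2]
    exact (h0 (measurableSet_singleton false)).inter (h1 (measurableSet_singleton true))

theorem star_exists (d : ℕ) (l p : ℝ) (h0 : 0 ≤ l) (h1 : l ≤ 1) (hp : l * (1 - l) = p)
    (hpd : l ^ d = p) :
    ∃ (Ω : Type) (_ : MeasurableSpace Ω) (μ : Measure Ω),
    IsProbabilityMeasure μ ∧ ∃ J : Option (Fin d × ℕ) → Ω → Bool,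
      (∀ v, Measurable (J v)) ∧ HardCore (starGraph d) μ J ∧ OneDependent (starGraph d) μ J ∧
      ∀ v, (μ {ω | J v ω = true}).toReal = p := by
  classical
  lift l to NNReal using h0
  have h1' : l ≤ 1 := by exact_mod_cast h1
  let P : Measure Bool := bernoulliMeasure true false ⟨l, l.2, h1⟩
  have hPt : P {true} = (l : ENNReal) := by
    simp [P, bernoulliMeasure_def]
    rfl
  have hPf : P {false} = ((1 - l : NNReal) : ENNReal) := by
    simp only [P, bernoulliMeasure_def]
    simp
    congr 1
    ext
    simp [NNReal.coe_sub h1']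
  let μ : Measure (Fin d × ℕ → Bool) := Measure.infinitePi (fun _ => P)
  have hJm : ∀ v, Measurable (starJ d v) := fun v =>
    starJ_meas d v _ (fun e _ => measurable_pi_apply e)
  refine ⟨Fin d × ℕ → Bool, inferInstance, μ, inferInstance, starJ d, hJm, ?_, ?_, ?_⟩
  · intro u v huv
    convert measure_empty (μ := μ)
    ext ω
    simp only [Set.mem_ofPred_eq, Set.mem_empty_iff_false, iff_false]
    rintro ⟨ha, hb⟩
    rcases u with _ | ⟨i, k⟩ <;> rcases v with _ | ⟨j, m⟩
    · exact huv.ne rfl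
    · rw [starGraph_adj_none] at huv
      obtain ⟨i, hi⟩ := huv
      cases hi
      simp [starJ] at ha hb
      simp [ha] at hb
    · rw [SimpleGraph.adj_comm, starGraph_adj_none] at huv
      obtain ⟨i, hi⟩ := huv
      cases hi
      simp [starJ] at ha hb
      simp [hb] at ha
    · rw [starGraph_adj_some] at huv
      obtain ⟨rfl, rfl | rfl⟩ := huv <;> simp [starJ] at ha hb <;> simp [ha, hb] at *
  · intro A B hAB
    rw [IndepFun_iff_Indep]
    let m : Fin d × ℕ → MeasurableSpace (Fin d × ℕ → Bool) :=
      fun e => MeasurableSpace.comap (fun ω => ω e) inferInstance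
    have hind : iIndep m μ := by
      have := iIndepFun_infinitePi (P := fun _ : Fin d × ℕ => P) (X := fun _ x => x)
        (fun _ => measurable_id)
      rw [iIndepFun_iff_iIndep] at this
      exact this
    have hle : ∀ e, m e ≤ MeasurableSpace.pi := fun e => (measurable_pi_apply e).comap_le
    have hdis : Disjoint (⋃ a ∈ A, starEdges d a) (⋃ b ∈ B, starEdges d b) := by
      rw [Set.disjoint_left]
      intro e he1 he2
      simp only [Set.mem_iUnion] at he1 he2
      obtain ⟨a, ha, hea⟩ := he1
      obtain ⟨b, hb, heb⟩ := he2
      have h1 := hAB a ha b hb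
      rcases starEdges_far d a b e hea heb with h | h
      · exact h1.1 h
      · exact h1.2 h
    have key : ∀ C : Set (Option (Fin d × ℕ)),
        MeasurableSpace.comap (fun ω (a : C) => starJ d a.1 ω) inferInstance ≤
          ⨆ e ∈ ⋃ a ∈ C, starEdges d a, m e := by
      intro C
      rw [← measurable_iff_comap_le]
      refine @measurable_pi_lambda _ _ _ (_) _ _ fun c => ?_
      refine starJ_meas d c.1 _ fun e he => ?_
      have hmem : e ∈ ⋃ a ∈ C, starEdges d a := by
        simp only [Set.mem_iUnion]
        exact ⟨c.1, c.2, he⟩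
      rw [measurable_iff_comap_le]
      exact le_iSup₂ (f := fun e (_ : e ∈ ⋃ a ∈ C, starEdges d a) => m e) e hmem
    exact indep_of_indep_of_le_left (indep_of_indep_of_le_right
      (indep_iSup_of_disjoint hle hind hdis) (key B)) (key A)
  · rintro (_ | ⟨i, k⟩)
    · have : {ω | starJ d none ω = true} =
          Set.pi ((Finset.univ.image (fun i : Fin d => (i, 0)) : Finset (Fin d × ℕ)) : Set _)
            (fun _ => {true}) := by
        ext ω
        simp [starJ, Set.mem_pi]
      rw [this, Measure.infinitePi_pi _ (by simp), Finset.prod_const, hPt,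
        Finset.card_image_of_injective _ (fun a b h => by simpa using h)]
      simp [hpd]
    · have : {ω | starJ d (some (i, k)) ω = true} =
          Set.pi (({(i, k), (i, k + 1)} : Finset (Fin d × ℕ)) : Set _)
            (fun e => if e = (i, k) then {false} else {true}) := by
        ext ω
        simp [starJ, Set.mem_pi]
      rw [this, Measure.infinitePi_pi _ (by simp), Finset.prod_pair (by simp)]
      simp only [if_true, Prod.mk.injEq, true_and, Nat.succ_ne_self, if_false, hPt, hPf]
      rw [ENNReal.toReal_mul]
      simp only [ENNReal.coe_toReal, NNReal.coe_sub h1']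
      rw [← hp]
      push_cast
      ring

/-! ### Upper bound -/

section upper

variable {V Ω : Type*} [MeasurableSpace Ω]

/-- Vacancy probability. -/
noncomputable def vac (μ : Measure Ω) (J : V → Ω → Bool) (S : Finset V) : ℝ :=
  μ.real {ω | ∀ v ∈ S, J v ω = false}

theorem vac_meas_comap (J : V → Ω → Bool) (S : Finset V) :
    MeasurableSet[MeasurableSpace.comap (fun ω (a : (S : Set V)) => J a.1 ω) inferInstance]
      {ω | ∀ v ∈ S, J v ω = false} := by
  refine ⟨⋂ a : (S : Set V), (fun x => x a) ⁻¹' {false}, ?_, ?_⟩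
  · exact MeasurableSet.iInter fun a => measurable_pi_apply a (measurableSet_singleton _)
  · ext ω; simp

theorem vac_union [DecidableEq V] (G : SimpleGraph V) (μ : Measure Ω) (J : V → Ω → Bool)
    (hD : OneDependent G μ J) (A B : Finset V)
    (hAB : ∀ a ∈ A, ∀ b ∈ B, a ≠ b ∧ ¬G.Adj a b) :
    vac μ J (A ∪ B) = vac μ J A * vac μ J B := by
  have h := (hD A B (by simpa using hAB)).meas_inter (vac_meas_comap J A) (vac_meas_comap J B)
  have h2 : {ω | ∀ v ∈ A ∪ B, J v ω = false} =
      {ω | ∀ v ∈ A, J v ω = false} ∩ {ω | ∀ v ∈ B, J v ω = false} := by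
    ext ω
    simp only [Finset.mem_union, Set.mem_ofPred_eq, Set.mem_inter_iff]
    constructor
    · exact fun h => ⟨fun v hv => h v (Or.inl hv), fun v hv => h v (Or.inr hv)⟩
    · rintro ⟨h1, h2⟩ v (hv | hv)
      exacts [h1 v hv, h2 v hv]
  unfold vac Measure.real
  rw [h2, h, ENNReal.toReal_mul]

theorem vac_meas (J : V → Ω → Bool) (hJ : ∀ v, Measurable (J v)) (S : Finset V) :
    MeasurableSet {ω | ∀ v ∈ S, J v ω = false} := by
  have : {ω | ∀ v ∈ S, J v ω = false} = ⋂ v ∈ S, J v ⁻¹' {false} := by ext; simp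
  rw [this]
  exact S.measurableSet_biInter fun v _ => hJ v (measurableSet_singleton _)

theorem vac_insert [DecidableEq V] (G : SimpleGraph V) (μ : Measure Ω) [IsProbabilityMeasure μ]
    (J : V → Ω → Bool) (hJ : ∀ v, Measurable (J v)) (hH : HardCore G μ J)
    (hD : OneDependent G μ J) (p : ℝ) (hp : ∀ v, (μ {ω | J v ω = true}).toReal = p)
    (v : V) (S T : Finset V) (hTS : T ⊆ S) (hT : ∀ t ∈ T, v ≠ t ∧ ¬G.Adj v t)
    (hS : ∀ s ∈ S, s ∉ T → G.Adj v s) :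
    vac μ J (insert v S) = vac μ J S - p * vac μ J T := by
  have hms : MeasurableSet {ω | J v ω = true} := hJ v (measurableSet_singleton _)
  have e1 := measureReal_sdiff_add_inter (μ := μ) (s := {ω | ∀ v ∈ S, J v ω = false}) hms
  have e2 : {ω | ∀ v ∈ S, J v ω = false} \ {ω | J v ω = true} =
      {ω | ∀ u ∈ insert v S, J u ω = false} := by
    ext ω
    simp [and_comm]
  have e3 : μ.real ({ω | ∀ v ∈ S, J v ω = false} ∩ {ω | J v ω = true}) =
      μ.real ({ω | J v ω = true} ∩ {ω | ∀ v ∈ T, J v ω = false}) := by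
    apply measureReal_congr
    have hall : ∀ᵐ ω ∂μ, ∀ s ∈ S, s ∉ T → ¬ (J v ω = true ∧ J s ω = true) := by
      rw [Filter.eventually_all_finset]
      intro s hs
      by_cases hsT : s ∈ T
      · simp [hsT]
      · have := hH v s (hS s hs hsT)
        have h3 : ∀ᵐ ω ∂μ, ¬ (J v ω = true ∧ J s ω = true) := by
          rw [ae_iff]; simpa using this
        filter_upwards [h3] with ω hω _ using hω
    filter_upwards [hall] with ω hω
    apply propext
    change ((∀ v ∈ S, J v ω = false) ∧ J v ω = true) ↔ (J v ω = true ∧ ∀ v ∈ T, J v ω = false)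
    constructor
    · exact fun h => ⟨h.2, fun t ht => h.1 t (hTS ht)⟩
    · rintro ⟨h1, h2⟩
      refine ⟨fun s hs => ?_, h1⟩
      by_cases hsT : s ∈ T
      · exact h2 s hsT
      · have := hω s hs hsT
        simpa [h1] using this
  have e4 : μ.real ({ω | J v ω = true} ∩ {ω | ∀ v ∈ T, J v ω = false}) = p * vac μ J T := by
    have h := (hD {v} T (by simpa using hT)).meas_inter
      (s := {ω | J v ω = true}) (t := {ω | ∀ v ∈ T, J v ω = false})
      ⟨(fun x => x ⟨v, rfl⟩) ⁻¹' {true}, measurable_pi_apply _ (measurableSet_singleton _),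
        by ext; simp⟩ (vac_meas_comap J T)
    unfold vac Measure.real
    rw [h, ENNReal.toReal_mul, hp v]
  rw [e2, e3, e4] at e1
  unfold vac at *
  linarith

end upper

/-- Vacancy probabilities of paths. -/
noncomputable def pathSeq (p : ℝ) : ℕ → ℝ
  | 0 => 1
  | 1 => 1 - p
  | n + 2 => pathSeq p (n + 1) - p * pathSeq p n

theorem pathSeq_bound (d : ℕ) (p : ℝ) (hp : 0 < p) (hnn : ∀ n, 0 ≤ pathSeq p n)
    (hst : ∀ n, p * pathSeq p n ^ d ≤ pathSeq p (n + 1) ^ d) :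
    p ≤ 1 / 4 ∧ p ≤ ((1 + Real.sqrt (1 - 4 * p)) / 2) ^ d := by
  have hrec : ∀ n, pathSeq p (n + 2) = pathSeq p (n + 1) - p * pathSeq p n := fun n => by
    rw [pathSeq]
  have hpos : ∀ n, 0 < pathSeq p n := by
    intro n
    induction n with
    | zero => simp [pathSeq]
    | succ n ih =>
      refine lt_of_le_of_ne (hnn _) fun h => ?_
      have h2 := hrec n
      have h3 := hnn (n + 2)
      have := mul_pos hp ih
      linarith
  let r : ℕ → ℝ := fun n => pathSeq p (n + 1) / pathSeq p n
  have hrpos : ∀ n, 0 < r n := fun n => div_pos (hpos _) (hpos _)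
  have hr : ∀ n, r (n + 1) = 1 - p / r n := by
    intro n
    have h1 := (hpos n).ne'
    have h2 := (hpos (n + 1)).ne'
    change pathSeq p (n + 2) / pathSeq p (n + 1) = 1 - p / (pathSeq p (n + 1) / pathSeq p n)
    rw [hrec]
    field_simp
  have hr0 : r 0 = 1 - p := by simp [r, pathSeq]
  have hanti : Antitone r := by
    apply antitone_nat_of_succ_le
    intro n
    induction n with
    | zero =>
      rw [hr 0]
      have h1 := hrpos 0
      have : p ≤ p / r 0 := by
        rw [le_div_iff₀ h1]
        rw [hr0] at *
        nlinarith
      linarith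
    | succ n ih =>
      have e1 := hr (n + 1)
      have e2 := hr n
      have := div_le_div_of_nonneg_left hp.le (hrpos (n + 1)) ih
      linarith
  have hlim := tendsto_atTop_ciInf hanti ⟨0, by rintro _ ⟨n, rfl⟩; exact (hrpos n).le⟩
  set L := ⨅ i, r i
  have hL0 : 0 ≤ L := ge_of_tendsto' hlim fun n => (hrpos n).le
  have hLd : p ≤ L ^ d := by
    refine ge_of_tendsto' (hlim.pow d) fun n => ?_
    change p ≤ (pathSeq p (n + 1) / pathSeq p n) ^ d
    rw [div_pow, le_div_iff₀ (pow_pos (hpos n) d)]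
    exact hst n
  have hquad : L * L = L - p := by
    refine tendsto_nhds_unique (((Filter.tendsto_add_atTop_iff_nat 1).2 hlim).mul hlim) ?_
    refine (hlim.sub_const p).congr fun n => ?_
    rw [hr n]
    have := (hrpos n).ne'
    field_simp
  refine ⟨by nlinarith [sq_nonneg (2 * L - 1)], hLd.trans (pow_le_pow_left₀ hL0 ?_ d)⟩
  have : 2 * L - 1 ≤ Real.sqrt (1 - 4 * p) := Real.le_sqrt_of_sq_le (by nlinarith)
  linarith

/-- A segment of a ray. -/
def seg (d : ℕ) (i : Fin d) (m n : ℕ) : Finset (Option (Fin d × ℕ)) :=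
  (Finset.range n).image fun j => some (i, m + j)

theorem mem_seg {d : ℕ} {i : Fin d} {m n : ℕ} {v : Option (Fin d × ℕ)} :
    v ∈ seg d i m n ↔ ∃ j < n, some (i, m + j) = v := by
  simp [seg]

theorem star_upper (d : ℕ) (p : ℝ) (hp0 : 0 < p) {Ω : Type} [MeasurableSpace Ω] (μ : Measure Ω)
    [IsProbabilityMeasure μ] (J : Option (Fin d × ℕ) → Ω → Bool)
    (hd : 2 ≤ d) (hJ : ∀ v, Measurable (J v)) (hH : HardCore (starGraph d) μ J)
    (hD : OneDependent (starGraph d) μ J) (hp : ∀ v, (μ {ω | J v ω = true}).toReal = p) :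
    p ≤ 1 / 4 ∧ p ≤ ((1 + Real.sqrt (1 - 4 * p)) / 2) ^ d := by
  classical
  have hempty : vac μ J ∅ = 1 := by simp [vac]
  have hseg : ∀ i m n, vac μ J (seg d i m n) = pathSeq p n := by
    intro i m n
    induction n using Nat.strong_induction_on with
    | _ n ih =>
      match n, ih with
      | 0, _ => simpa [seg, pathSeq] using hempty
      | 1, _ =>
        have h1 : seg d i m 1 = insert (some (i, m)) ∅ := by simp [seg]
        rw [h1, vac_insert _ μ J hJ hH hD p hp _ ∅ ∅ (by simp) (by simp) (by simp), hempty]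
        simp [pathSeq]
      | n + 2, ih =>
        have h1 : seg d i m (n + 2) = insert (some (i, m + (n + 1))) (seg d i m (n + 1)) := by
          simp [seg, Finset.range_add_one (n := n + 1)]
        rw [h1, vac_insert _ μ J hJ hH hD p hp _ (seg d i m (n + 1)) (seg d i m n),
          ih _ (by omega), ih _ (by omega), pathSeq]
        · intro v hv
          rw [mem_seg] at *
          obtain ⟨j, hj, rfl⟩ := hv
          exact ⟨j, by omega, rfl⟩
        · intro v hv
          rw [mem_seg] at hv
          obtain ⟨j, hj, rfl⟩ := hv
          rw [starGraph_adj_some]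
          simp
          omega
        · intro v hv hv2
          rw [mem_seg] at hv hv2
          obtain ⟨j, hj, rfl⟩ := hv
          have : j = n := by
            by_contra hne
            exact hv2 ⟨j, by omega, rfl⟩
          rw [starGraph_adj_some]
          simp
          omega
  have hrays : ∀ m n (I : Finset (Fin d)),
      vac μ J (I.biUnion fun i => seg d i m n) = pathSeq p n ^ I.card := by
    intro m n I
    induction I using Finset.induction_on with
    | empty => simpa using hempty
    | insert i I hi ih =>
      rw [Finset.biUnion_insert, vac_union _ μ J hD, ih, hseg, Finset.card_insert_of_notMem hi,
        pow_succ, mul_comm]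
      intro a ha b hb
      rw [Finset.mem_biUnion] at hb
      obtain ⟨j, hj, hb⟩ := hb
      rw [mem_seg] at ha hb
      obtain ⟨x, hx, rfl⟩ := ha
      obtain ⟨y, hy, rfl⟩ := hb
      have : i ≠ j := fun h => hi (h ▸ hj)
      rw [starGraph_adj_some]
      simp [this]
  have hnn : ∀ S, 0 ≤ vac μ J S := fun S => measureReal_nonneg
  refine pathSeq_bound d p hp0 (fun n => ?_) (fun n => ?_)
  · rw [← hseg ⟨0, by omega⟩ 0 n]
    exact hnn _
  · have h := vac_insert _ μ J hJ hH hD p hp none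
      (Finset.univ.biUnion fun i => seg d i 0 (n + 1))
      (Finset.univ.biUnion fun i => seg d i 1 n) ?_ ?_ ?_
    · rw [hrays, hrays, Finset.card_univ, Fintype.card_fin] at h
      have := hnn (insert none (Finset.univ.biUnion fun i => seg d i 0 (n + 1)))
      linarith
    · intro v hv
      simp only [Finset.mem_biUnion, Finset.mem_univ, true_and, mem_seg] at hv ⊢
      obtain ⟨i, j, hj, rfl⟩ := hv
      exact ⟨i, 1 + j, by omega, by simp⟩
    · intro v hv
      simp only [Finset.mem_biUnion, Finset.mem_univ, true_and, mem_seg] at hv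
      obtain ⟨i, j, hj, rfl⟩ := hv
      rw [starGraph_adj_none]
      simp
    · intro v hv hv2
      simp only [Finset.mem_biUnion, Finset.mem_univ, true_and, mem_seg] at hv hv2
      obtain ⟨i, j, hj, rfl⟩ := hv
      rw [starGraph_adj_none]
      refine ⟨i, ?_⟩
      rcases j with _ | j
      · rfl
      · exact absurd ⟨i, j, by omega, by simp; omega⟩ hv2

theorem star_root (d : ℕ) (hd : 2 ≤ d) :
    ∃ q ∈ Set.Ioc (0 : ℝ) (1 / 4), ((1 + Real.sqrt (1 - 4 * q)) / 2) ^ d = q := by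
  let f : ℝ → ℝ := fun q => ((1 + Real.sqrt (1 - 4 * q)) / 2) ^ d - q
  have hf : Continuous f := by fun_prop
  have h0 : f 0 = 1 := by norm_num [f]
  have h1 : f (1 / 4) ≤ 0 := by
    have : ((1 : ℝ) / 2) ^ d ≤ (1 / 2) ^ 2 :=
      pow_le_pow_of_le_one (by norm_num) (by norm_num) hd
    have h2 : f (1 / 4) = (1 / 2) ^ d - 1 / 4 := by norm_num [f]
    rw [h2]
    norm_num at this ⊢
    linarith
  obtain ⟨q, ⟨hq0, hq1⟩, hq⟩ := intermediate_value_Icc' (by norm_num : (0 : ℝ) ≤ 1 / 4)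
    hf.continuousOn (show (0 : ℝ) ∈ Set.Icc (f (1 / 4)) (f 0) from ⟨h1, by rw [h0]; norm_num⟩)
  refine ⟨q, ⟨lt_of_le_of_ne hq0 ?_, hq1⟩, sub_eq_zero.1 hq⟩
  rintro rfl
  rw [h0] at hq
  norm_num at hq

/-- For each `d ≥ 2`, the critical point `p_h(S^d)` of the `d`-ray
star graph lies in `(0, 1/4]` and satisfies `((1 + √(1 - 4p))/2)^d = p`; i.e. it is
the unique solution of this equation in `(0, 1/4]`. -/
theorem pCrit_starGraph (d : ℕ) (hd : 2 ≤ d) :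
    pCrit (starGraph d) ∈ Set.Ioc (0 : ℝ) (1 / 4) ∧
    ((1 + Real.sqrt (1 - 4 * pCrit (starGraph d))) / 2) ^ d = pCrit (starGraph d) := by
  obtain ⟨q, hq, hqd⟩ := star_root d hd
  suffices h : pCrit (starGraph d) = q by
    rw [h]
    exact ⟨hq, hqd⟩
  have hs := Real.sq_sqrt (show 0 ≤ 1 - 4 * q by linarith [hq.2])
  have hs0 := Real.sqrt_nonneg (1 - 4 * q)
  refine IsGreatest.csSup_eq ⟨?_, ?_⟩
  · refine star_exists d ((1 + Real.sqrt (1 - 4 * q)) / 2) q (by positivity) ?_ ?_ hqd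
    · nlinarith [hq.1]
    · nlinarith
  · rintro p ⟨Ω, mΩ, μ, hμ, J, hJ, hH, hD, hp⟩
    by_contra! hlt
    obtain ⟨h1, h2⟩ := star_upper d p (hq.1.trans hlt) μ J hd hJ hH hD hp
    have h3 : ((1 + Real.sqrt (1 - 4 * p)) / 2) ^ d ≤ ((1 + Real.sqrt (1 - 4 * q)) / 2) ^ d := by
      gcongr
    linarith
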